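/- For every τ in the complex upper half-plane, c(τ) ≠ 0 and c₁(τ/2) ≠ 0, and for all z ∈ ℂ one has 4z³ − β(τ)z + 1 = 4·(z − c(τ))·(z − c₁(τ/2)/(2c(τ)))·(z + 1/(2c₁(τ/2))); i.e., the three roots of the cubic 4x³ − β(τ)x + 1 are exactly c(τ), c₁(τ/2)/(2c(τ)), and −1/(2c₁(τ/2)). -/

import Mathlib

open Complex

/-- The nome `q = exp(2πiτ)`. -/
noncomputable def nome (τ : ℂ) : ℂ := Complex.exp (2 * Real.pi * I * τ)

/-- Ramanujan's cubic continued fraction, as an infinite product: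
`c(τ) = q^{1/3} ∏_{n≥1} (1-q^{6n-1})(1-q^{6n-5})/(1-q^{6n-3})²`. -/
noncomputable def c (τ : ℂ) : ℂ :=
  Complex.exp (2 * Real.pi * I * τ / 3) *
    ∏' n : ℕ,
      ((1 - nome τ ^ (6 * (n + 1) - 1)) * (1 - nome τ ^ (6 * (n + 1) - 5)) /
        (1 - nome τ ^ (6 * (n + 1) - 3)) ^ 2)

/-- The Dedekind eta function `η(τ) = e^{πiτ/12} ∏_{n≥1} (1 - e^{2πinτ})`. -/
noncomputable def dedekindEta (τ : ℂ) : ℂ :=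
  Complex.exp (Real.pi * I * τ / 12) *
    ∏' n : ℕ, (1 - Complex.exp (2 * Real.pi * I * (n + 1) * τ))

/-- `α(τ) = 3 + 27 η(9τ)³/η(τ)³`. -/
noncomputable def alpha (τ : ℂ) : ℂ :=
  3 + 27 * dedekindEta (9 * τ) ^ 3 / dedekindEta τ ^ 3

/-- `β(τ) = 3 + η(τ/3)³/η(3τ)³`. -/
noncomputable def beta (τ : ℂ) : ℂ :=
  3 + dedekindEta (τ / 3) ^ 3 / dedekindEta (3 * τ) ^ 3

/-- `c₁(τ) = c(τ + 3/2)`. -/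
noncomputable def c₁ (τ : ℂ) : ℂ := c (τ + 3 / 2)

/-! Put `x = q^{1/3}`, `φ(x) = f(x, x)` and `2ψ(x) = f(1, x)`, where `f` is Ramanujan's theta
function. The 3-dissections of `φ(-x)` and `ψ(x)`, with every piece evaluated by the Jacobi triple
product, say that `1 - 2c = φ(-x) / φ(-x⁹)` and `1 + 1/c = ψ(x) / (x ψ(x⁹))`. Multiplying the square
of the first by the second gives `4c² + 1/c = β`, so `c(τ)` is a root of the cubic. The relation
`ψ(x)² = φ(x) ψ(x²)` gives `(1 + 1/c(x))² = (1 - 2c(-x)) (1 + 1/c(x²))`, which together with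
`c(x) c(-x) = -c(x²)` becomes the modular equation `v² + 2vw² = w` for `v = c(x)`, `w = c(x²)`.
Since `x(τ/2 + 3/2)² = x(τ)`, it holds for `v = c₁(τ/2)` and `w = c(τ)`, and says precisely that
`w`, `v / (2w)` and `-1 / (2v)` sum to zero; their product is `-1/4`.
-/

open Finset Filter Topology Function.Periodic

section QPochhammer

variable {𝕜 : Type*} [NormedField 𝕜] {a q x : 𝕜}

/-- The infinite `q`-Pochhammer symbol `(a; q)_∞`, meaningful for `‖q‖ < 1`. -/
noncomputable def qPochhammer (a q : 𝕜) : 𝕜 := ∏' n : ℕ, (1 - a * q ^ n)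

/-- Euler's function `(x; x)_∞`, the Dedekind eta function without its leading power of `x`. -/
noncomputable def eulerFunction (x : 𝕜) : 𝕜 := qPochhammer x x

lemma norm_pow_lt_one (hx : ‖x‖ < 1) {k : ℕ} (hk : k ≠ 0) : ‖x ^ k‖ < 1 := by
  simpa using pow_lt_one₀ (norm_nonneg x) hx hk

lemma one_sub_mul_pow_ne_zero (ha : ‖a‖ < 1) (hq : ‖q‖ < 1) (n : ℕ) : 1 - a * q ^ n ≠ 0 := by
  have haq : ‖a * q ^ n‖ < 1 := by
    rw [norm_mul, norm_pow]
    exact (mul_le_of_le_one_right (norm_nonneg a) (pow_le_one₀ (norm_nonneg q) hq.le)).trans_lt ha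
  intro h
  simp [← sub_eq_zero.mp h] at haq

lemma summable_norm_neg_mul_pow (a : 𝕜) (hq : ‖q‖ < 1) :
    Summable fun n : ℕ ↦ ‖-(a * q ^ n)‖ := by
  simpa using (summable_geometric_of_lt_one (norm_nonneg q) hq).mul_left ‖a‖

variable [CompleteSpace 𝕜]

lemma multipliable_one_sub_mul_pow (a : 𝕜) (hq : ‖q‖ < 1) :
    Multipliable fun n : ℕ ↦ 1 - a * q ^ n := by
  simpa [sub_eq_add_neg] using multipliable_one_add_of_summable (summable_norm_neg_mul_pow a hq)

lemma hasProd_qPochhammer (a : 𝕜) (hq : ‖q‖ < 1) :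
    HasProd (fun n : ℕ ↦ 1 - a * q ^ n) (qPochhammer a q) :=
  (multipliable_one_sub_mul_pow a hq).hasProd

lemma qPochhammer_ne_zero (ha : ‖a‖ < 1) (hq : ‖q‖ < 1) : qPochhammer a q ≠ 0 := by
  simpa [qPochhammer, sub_eq_add_neg] using tprod_one_add_ne_zero_of_summable
    (fun n ↦ by simpa [sub_eq_add_neg] using one_sub_mul_pow_ne_zero ha hq n)
    (summable_norm_neg_mul_pow a hq)

lemma eulerFunction_ne_zero (hx : ‖x‖ < 1) : eulerFunction x ≠ 0 := qPochhammer_ne_zero hx hx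

lemma eulerFunction_pow_ne_zero (hx : ‖x‖ < 1) {k : ℕ} (hk : k ≠ 0) : eulerFunction (x ^ k) ≠ 0 :=
  eulerFunction_ne_zero (norm_pow_lt_one hx hk)

lemma qPochhammer_eq_one_sub_mul (a : 𝕜) (hq : ‖q‖ < 1) :
    qPochhammer a q = (1 - a) * qPochhammer (a * q) q := by
  have hshift (n : ℕ) : a * q ^ (n + 1) = a * q * q ^ n := by ring
  have h := tprod_eq_zero_mul' (f := fun n : ℕ ↦ 1 - a * q ^ n)
    (by simpa only [hshift] using multipliable_one_sub_mul_pow (a * q) hq)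
  simpa only [qPochhammer, pow_zero, mul_one, hshift] using h

lemma qPochhammer_eq_prod_fin (a : 𝕜) (hq : ‖q‖ < 1) (k : ℕ) [NeZero k] :
    qPochhammer a q = ∏ r : Fin k, qPochhammer (a * q ^ (r : ℕ)) (q ^ k) := by
  have hsplit := (((Equiv.prodComm _ _).trans (Nat.divModEquiv k).symm).hasProd_iff
    (f := fun n : ℕ ↦ 1 - a * q ^ n)).mpr (hasProd_qPochhammer a hq)
  have hfiber (r : Fin k) : HasProd (fun n : ℕ ↦ 1 - a * q ^ (n * k + r))
      (qPochhammer (a * q ^ (r : ℕ)) (q ^ k)) := by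
    refine (hasProd_qPochhammer _ (norm_pow_lt_one hq (NeZero.ne k))).congr_fun fun n ↦ ?_
    ring
  exact (hsplit.prod_fiberwise hfiber).unique (hasProd_fintype _)

lemma qPochhammer_eq_mul_mul (a : 𝕜) (hq : ‖q‖ < 1) :
    qPochhammer a q =
      qPochhammer a (q ^ 3) * qPochhammer (a * q) (q ^ 3) * qPochhammer (a * q ^ 2) (q ^ 3) := by
  simpa [Fin.prod_univ_three] using qPochhammer_eq_prod_fin a hq 3

lemma qPochhammer_mul_qPochhammer_neg (a : 𝕜) (hq : ‖q‖ < 1) :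
    qPochhammer a q * qPochhammer (-a) q = qPochhammer (a ^ 2) (q ^ 2) := by
  rw [qPochhammer, qPochhammer, qPochhammer,
    ← (multipliable_one_sub_mul_pow a hq).tprod_mul (multipliable_one_sub_mul_pow (-a) hq)]
  congr 1 with n
  ring

lemma qPochhammer_self_sq (hx : ‖x‖ < 1) :
    qPochhammer x (x ^ 2) = eulerFunction x / eulerFunction (x ^ 2) := by
  have hsplit : eulerFunction x = qPochhammer x (x ^ 2) * eulerFunction (x ^ 2) := by
    simpa [eulerFunction, ← sq] using qPochhammer_eq_prod_fin x hx 2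
  rw [hsplit, mul_div_cancel_right₀ _ (eulerFunction_pow_ne_zero hx two_ne_zero)]

lemma qPochhammer_neg_self (hx : ‖x‖ < 1) :
    qPochhammer (-x) x = eulerFunction (x ^ 2) / eulerFunction x := by
  rw [eq_div_iff (eulerFunction_ne_zero hx), mul_comm, eulerFunction, eulerFunction,
    qPochhammer_mul_qPochhammer_neg x hx]

lemma eulerFunction_neg (hx : ‖x‖ < 1) :
    eulerFunction (-x) =
      eulerFunction (x ^ 2) ^ 3 / (eulerFunction x * eulerFunction (x ^ 4)) := by
  have h1 := eulerFunction_ne_zero hx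
  have h2 := eulerFunction_pow_ne_zero hx two_ne_zero
  have h4 := eulerFunction_pow_ne_zero hx four_ne_zero
  have h := qPochhammer_mul_qPochhammer_neg x (norm_pow_lt_one hx two_ne_zero)
  have hneg := qPochhammer_self_sq (x := -x) (by rwa [norm_neg])
  rw [neg_sq] at hneg
  rw [qPochhammer_self_sq hx, hneg, qPochhammer_self_sq (norm_pow_lt_one hx two_ne_zero),
    ← pow_mul] at h
  field_simp at h ⊢
  linear_combination h

lemma qPochhammer_neg_mul_qPochhammer_neg_sq (hx : ‖x‖ < 1) :
    qPochhammer (-x) (x ^ 3) * qPochhammer (-x ^ 2) (x ^ 3) =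
      eulerFunction (x ^ 2) * eulerFunction (x ^ 3) /
        (eulerFunction x * eulerFunction (x ^ 6)) := by
  have h1 := eulerFunction_ne_zero hx
  have h3 := eulerFunction_pow_ne_zero hx three_ne_zero
  have h6 := eulerFunction_pow_ne_zero hx (k := 6) (by norm_num)
  have hsplit := qPochhammer_eq_mul_mul (-x) hx
  rw [neg_mul, neg_mul, ← sq, ← pow_succ', qPochhammer_neg_self hx,
    qPochhammer_neg_self (norm_pow_lt_one hx three_ne_zero), ← pow_mul] at hsplit
  field_simp at hsplit ⊢
  linear_combination -hsplit

lemma qPochhammer_mul_qPochhammer_pow_five (hx : ‖x‖ < 1) :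
    qPochhammer x (x ^ 6) * qPochhammer (x ^ 5) (x ^ 6) =
      eulerFunction x * eulerFunction (x ^ 6) /
        (eulerFunction (x ^ 2) * eulerFunction (x ^ 3)) := by
  have h2 := eulerFunction_pow_ne_zero hx two_ne_zero
  have h3 := eulerFunction_pow_ne_zero hx three_ne_zero
  have h6 := eulerFunction_pow_ne_zero hx (k := 6) (by norm_num)
  have hsplit := qPochhammer_eq_mul_mul x (norm_pow_lt_one hx two_ne_zero)
  simp only [← pow_mul, ← pow_succ', Nat.reduceMul, Nat.reduceAdd] at hsplit
  have hcube := qPochhammer_self_sq (norm_pow_lt_one hx three_ne_zero)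
  rw [← pow_mul] at hcube
  rw [qPochhammer_self_sq hx, hcube] at hsplit
  field_simp at hsplit ⊢
  linear_combination -hsplit

end QPochhammer

section JacobiTripleProduct

variable {𝕜 : Type*} [NormedField 𝕜] {a b q : 𝕜}

/-- The general term `a^{n(n+1)/2} b^{n(n-1)/2}` of Ramanujan's theta series; both integer divisions
by two are exact. -/
noncomputable def thetaTerm (a b : 𝕜) (n : ℤ) : 𝕜 :=
  a ^ (n * (n + 1) / 2) * b ^ (n * (n - 1) / 2)

/-- Ramanujan's general theta function `f(a, b) = ∑_{n ∈ ℤ} a^{n(n+1)/2} b^{n(n-1)/2}`. -/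
noncomputable def ramanujanTheta (a b : 𝕜) : 𝕜 := ∑' n : ℤ, thetaTerm a b n

lemma thetaTerm_zero (a b : 𝕜) : thetaTerm a b 0 = 1 := by simp [thetaTerm]

lemma thetaTerm_ne_zero (ha : a ≠ 0) (hb : b ≠ 0) (n : ℤ) : thetaTerm a b n ≠ 0 :=
  mul_ne_zero (zpow_ne_zero _ ha) (zpow_ne_zero _ hb)

lemma thetaTerm_neg (a b : 𝕜) (n : ℤ) : thetaTerm a b (-n) = thetaTerm b a n := by
  rw [thetaTerm, thetaTerm, mul_comm, show -n * (-n - 1) = n * (n + 1) by ring,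
    show -n * (-n + 1) = n * (n - 1) by ring]

lemma ramanujanTheta_comm (a b : 𝕜) : ramanujanTheta a b = ramanujanTheta b a := by
  rw [ramanujanTheta, ← (Equiv.neg ℤ).tsum_eq]
  simp only [Equiv.neg_apply, thetaTerm_neg, ramanujanTheta]

lemma thetaTerm_of_two_mul_eq {n k l : ℤ} (hk : n * (n + 1) = 2 * k) (hl : n * (n - 1) = 2 * l) :
    thetaTerm a b n = a ^ k * b ^ l := by
  rw [thetaTerm, hk, hl, Int.mul_ediv_cancel_left _ two_ne_zero,
    Int.mul_ediv_cancel_left _ two_ne_zero]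

lemma exists_triangular_exponents (n : ℤ) :
    ∃ k l : ℤ, n * (n + 1) = 2 * k ∧ n * (n - 1) = 2 * l := by
  obtain ⟨k, hk⟩ := (Int.even_mul_succ_self n).two_dvd
  exact ⟨k, k - n, hk, by linear_combination hk⟩

lemma thetaTerm_add_one (ha : a ≠ 0) (hb : b ≠ 0) (n : ℤ) :
    thetaTerm a b (n + 1) = a * (a * b) ^ n * thetaTerm a b n := by
  obtain ⟨k, l, hk, hl⟩ := exists_triangular_exponents n
  rw [thetaTerm_of_two_mul_eq hk hl,
    thetaTerm_of_two_mul_eq (k := 1 + n + k) (l := n + l) (by linear_combination hk)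
      (by linear_combination hl),
    zpow_add₀ ha, zpow_add₀ ha, zpow_add₀ hb, zpow_one, mul_zpow]
  ring

lemma thetaTerm_three_mul (ha : a ≠ 0) (hb : b ≠ 0) (n : ℤ) :
    thetaTerm a b (3 * n) = thetaTerm (a ^ 6 * b ^ 3) (a ^ 3 * b ^ 6) n := by
  obtain ⟨k, l, hk, hl⟩ := exists_triangular_exponents n
  rw [thetaTerm_of_two_mul_eq hk hl,
    thetaTerm_of_two_mul_eq (k := k * 6 + l * 3) (l := k * 3 + l * 6)
      (by linear_combination 6 * hk + 3 * hl) (by linear_combination 3 * hk + 6 * hl)]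
  simp only [mul_zpow, ← zpow_natCast, ← zpow_mul', zpow_add₀ ha, zpow_add₀ hb]
  push_cast
  ring

lemma thetaTerm_three_mul_add_one (ha : a ≠ 0) (hb : b ≠ 0) (n : ℤ) :
    thetaTerm a b (3 * n + 1) = a * thetaTerm (a ^ 9 * b ^ 6) (b ^ 3) n := by
  obtain ⟨k, l, hk, hl⟩ := exists_triangular_exponents n
  rw [thetaTerm_of_two_mul_eq hk hl,
    thetaTerm_of_two_mul_eq (k := 1 + k * 9) (l := k * 6 + l * 3)
      (by linear_combination 9 * hk) (by linear_combination 6 * hk + 3 * hl)]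
  simp only [mul_zpow, ← zpow_natCast, ← zpow_mul', zpow_add₀ ha, zpow_add₀ hb, zpow_one]
  push_cast
  ring

lemma thetaTerm_three_mul_sub_one (ha : a ≠ 0) (hb : b ≠ 0) (n : ℤ) :
    thetaTerm a b (3 * n - 1) = b * thetaTerm (a ^ 3) (a ^ 6 * b ^ 9) n := by
  rw [show 3 * n - 1 = -(3 * -n + 1) by ring, thetaTerm_neg, thetaTerm_three_mul_add_one hb ha,
    thetaTerm_neg, mul_comm (b ^ 9)]

/-- The reciprocal `1 / (q; q)_m`, extended by zero to negative `m` so that the finite theta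
sums can run over all of `ℤ`. -/
noncomputable def invQFactorial (q : 𝕜) (m : ℤ) : 𝕜 :=
  if m < 0 then 0 else (∏ k ∈ range m.toNat, (1 - q * q ^ k))⁻¹

lemma invQFactorial_of_neg {m : ℤ} (hm : m < 0) : invQFactorial q m = 0 := if_pos hm

@[simp] lemma invQFactorial_natCast (q : 𝕜) (m : ℕ) :
    invQFactorial q m = (∏ k ∈ range m, (1 - q * q ^ k))⁻¹ := by simp [invQFactorial]

lemma invQFactorial_sub_one (hq : ‖q‖ < 1) (m : ℤ) :
    invQFactorial q (m - 1) = (1 - q ^ m) * invQFactorial q m := by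
  rcases lt_trichotomy m 0 with hm | rfl | hm
  · rw [invQFactorial_of_neg hm, invQFactorial_of_neg (by lia), mul_zero]
  · simp [invQFactorial_of_neg]
  · obtain ⟨k, rfl⟩ : ∃ k : ℕ, m = k + 1 := ⟨(m - 1).toNat, by lia⟩
    have hk : 1 - q ^ (k + 1) ≠ 0 := by
      rw [pow_succ']
      exact one_sub_mul_pow_ne_zero hq hq k
    rw [add_sub_cancel_right, ← Nat.cast_add_one, invQFactorial_natCast, invQFactorial_natCast,
      prod_range_succ, zpow_natCast, ← pow_succ', mul_inv, mul_comm _ (1 - q ^ (k + 1))⁻¹,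
      mul_inv_cancel_left₀ hk]

/-- The general term of the finite Jacobi triple product with `m` factors `1 + a (ab)^i` and `n`
factors `1 + b (ab)^i`, divided by `(ab; ab)_{m+n}`. -/
noncomputable def finiteThetaTerm (a b : 𝕜) (m n j : ℤ) : 𝕜 :=
  thetaTerm a b j * (invQFactorial (a * b) (m - j) * invQFactorial (a * b) (n + j))

lemma finiteThetaTerm_neg (a b : 𝕜) (m n j : ℤ) :
    finiteThetaTerm a b m n (-j) = finiteThetaTerm b a n m j := by
  rw [finiteThetaTerm, finiteThetaTerm, thetaTerm_neg, sub_neg_eq_add, ← sub_eq_add_neg, mul_comm a,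
    mul_comm (invQFactorial _ (m + j))]

lemma finiteThetaTerm_add_one (ha : a ≠ 0) (hb : b ≠ 0) (hab : ‖a * b‖ < 1) (m n j : ℤ) :
    (1 - (a * b) ^ (m + 1 + n)) * finiteThetaTerm a b (m + 1) n j =
      finiteThetaTerm a b m n j + a * (a * b) ^ m * finiteThetaTerm a b m n (j - 1) := by
  have hab0 : a * b ≠ 0 := mul_ne_zero ha hb
  have hm := invQFactorial_sub_one hab (m + 1 - j)
  have hn := invQFactorial_sub_one hab (n + j)
  have hθ := thetaTerm_add_one ha hb (j - 1)
  have hpow : (a * b) ^ (m + 1 + n) = (a * b) ^ (m + 1 - j) * (a * b) ^ (n + j) := by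
    rw [← zpow_add₀ hab0]
    ring_nf
  have hpow' : (a * b) ^ m = (a * b) ^ (m + 1 - j) * (a * b) ^ (j - 1) := by
    rw [← zpow_add₀ hab0]
    ring_nf
  rw [show m + 1 - j - 1 = m - j by ring] at hm
  rw [sub_add_cancel] at hθ
  simp only [finiteThetaTerm]
  rw [show m - (j - 1) = m + 1 - j by ring, show n + (j - 1) = n + j - 1 by ring, hm, hn, hθ,
    hpow, hpow']
  ring

lemma hasSum_finiteThetaTerm_zero_zero (a b : 𝕜) : HasSum (finiteThetaTerm a b 0 0) 1 := by
  convert hasSum_single (0 : ℤ) fun j hj ↦ ?_ using 1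
  · simp [finiteThetaTerm, thetaTerm_zero, invQFactorial]
  · rcases hj.lt_or_gt with hj | hj
    · rw [finiteThetaTerm, invQFactorial_of_neg (m := 0 + j) (by lia), mul_zero, mul_zero]
    · rw [finiteThetaTerm, invQFactorial_of_neg (m := 0 - j) (by lia), zero_mul, mul_zero]

lemma hasSum_finiteThetaTerm_of_zero_left (ha : a ≠ 0) (hb : b ≠ 0) (hab : ‖a * b‖ < 1) {n : ℕ}
    {s : 𝕜} (h : HasSum (finiteThetaTerm a b 0 n) (s * invQFactorial (a * b) n)) (m : ℕ) :
    HasSum (finiteThetaTerm a b m n)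
      ((∏ i ∈ range m, (1 - -a * (a * b) ^ i)) * s * invQFactorial (a * b) (m + n)) := by
  induction m with
  | zero => simpa using h
  | succ m ih =>
    have hne : 1 - (a * b) ^ (m + 1 + n : ℤ) ≠ 0 := by
      have hfactor := one_sub_mul_pow_ne_zero hab hab (m + n)
      rwa [← pow_succ', add_right_comm, ← zpow_natCast, Nat.cast_add,
        Nat.cast_add_one] at hfactor
    have hinv := invQFactorial_sub_one hab (m + 1 + n)
    rw [add_right_comm, add_sub_cancel_right] at hinv
    have hshift := ((Equiv.subRight (1 : ℤ)).hasSum_iff.mpr ih).mul_left (a * (a * b) ^ m)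
    rw [Nat.cast_add_one, ← hasSum_mul_left_iff hne]
    convert ih.add hshift using 1
    · ext j
      simpa using finiteThetaTerm_add_one ha hb hab m n j
    · rw [prod_range_succ, hinv, add_right_comm]
      ring

lemma hasSum_finiteThetaTerm (ha : a ≠ 0) (hb : b ≠ 0) (hab : ‖a * b‖ < 1) (m n : ℕ) :
    HasSum (finiteThetaTerm a b m n)
      ((∏ i ∈ range m, (1 - -a * (a * b) ^ i)) * (∏ i ∈ range n, (1 - -b * (a * b) ^ i)) *
        invQFactorial (a * b) (m + n)) := by
  refine hasSum_finiteThetaTerm_of_zero_left ha hb hab ?_ m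
  have hzero : HasSum (finiteThetaTerm b a 0 (0 : ℕ)) (1 * invQFactorial (b * a) (0 : ℕ)) := by
    rw [invQFactorial_natCast, range_zero, prod_empty, inv_one, mul_one]
    exact hasSum_finiteThetaTerm_zero_zero b a
  have hswap := hasSum_finiteThetaTerm_of_zero_left hb ha (by rwa [mul_comm]) hzero n
  rw [← (Equiv.neg ℤ).hasSum_iff] at hswap
  simpa [Function.comp_def, finiteThetaTerm_neg, mul_comm b a] using hswap

lemma summable_norm_thetaTerm_natCast (ha : a ≠ 0) (hb : b ≠ 0) (hab : ‖a * b‖ < 1) :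
    Summable fun n : ℕ ↦ ‖thetaTerm a b n‖ := by
  have hne (n : ℕ) : ‖thetaTerm a b n‖ ≠ 0 := norm_ne_zero_iff.mpr (thetaTerm_ne_zero ha hb n)
  have hratio : Tendsto (fun n : ℕ ↦ ‖a * (a * b) ^ n‖) atTop (𝓝 0) := by
    simpa using ((tendsto_pow_atTop_nhds_zero_of_norm_lt_one hab).const_mul a).norm
  refine summable_of_ratio_test_tendsto_lt_one zero_lt_one (.of_forall hne)
    (hratio.congr fun n ↦ ?_)
  rw [norm_norm, norm_norm, Nat.cast_add_one, thetaTerm_add_one ha hb, zpow_natCast,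
    norm_mul _ (thetaTerm a b n), mul_div_cancel_right₀ _ (hne n)]

lemma summable_norm_thetaTerm (ha : a ≠ 0) (hb : b ≠ 0) (hab : ‖a * b‖ < 1) :
    Summable fun n : ℤ ↦ ‖thetaTerm a b n‖ := by
  refine .of_nat_of_neg (summable_norm_thetaTerm_natCast ha hb hab) ?_
  simpa only [thetaTerm_neg] using
    summable_norm_thetaTerm_natCast hb ha (by rwa [mul_comm])

variable [CompleteSpace 𝕜]

lemma tendsto_invQFactorial (hq : ‖q‖ < 1) :
    Tendsto (invQFactorial q) atTop (𝓝 (eulerFunction q)⁻¹) := by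
  rw [← Nat.map_cast_int_atTop, tendsto_map'_iff]
  simpa [Function.comp_def, eulerFunction] using
    (hasProd_qPochhammer q hq).tendsto_prod_nat.inv₀ (eulerFunction_ne_zero hq)

lemma exists_norm_invQFactorial_le (hq : ‖q‖ < 1) : ∃ M, ∀ m, ‖invQFactorial q m‖ ≤ M := by
  obtain ⟨M, hM⟩ :=
    ((tendsto_invQFactorial hq).comp tendsto_natCast_atTop_atTop).norm.bddAbove_range
  refine ⟨max 0 M, fun m ↦ ?_⟩
  rcases lt_or_ge m 0 with hm | hm
  · simp [invQFactorial_of_neg hm]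
  · lift m to ℕ using hm
    exact (hM (Set.mem_range_self m)).trans (le_max_right 0 M)

lemma tendsto_tsum_finiteThetaTerm (ha : a ≠ 0) (hb : b ≠ 0) (hab : ‖a * b‖ < 1) :
    Tendsto (fun n : ℕ ↦ ∑' j, finiteThetaTerm a b n n j) atTop
      (𝓝 (ramanujanTheta a b * ((eulerFunction (a * b))⁻¹ * (eulerFunction (a * b))⁻¹))) := by
  obtain ⟨M, hM⟩ := exists_norm_invQFactorial_le hab
  have hlim := tendsto_invQFactorial hab
  rw [ramanujanTheta, ← tsum_mul_right]
  refine tendsto_tsum_of_dominated_convergence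
    ((summable_norm_thetaTerm ha hb hab).mul_right (M * M)) (fun j ↦ ?_)
    (.of_forall fun n j ↦ ?_)
  · refine ((hlim.comp ?_).mul (hlim.comp ?_)).const_mul _
    · exact tendsto_atTop_add_const_right _ (-j) tendsto_natCast_atTop_atTop
    · exact tendsto_atTop_add_const_right _ j tendsto_natCast_atTop_atTop
  · rw [finiteThetaTerm, norm_mul, norm_mul]
    gcongr
    · exact (norm_nonneg _).trans (hM 0)
    · exact hM _
    · exact hM _

/-- The Jacobi triple product identity. -/
theorem ramanujanTheta_eq_qPochhammer (ha : a ≠ 0) (hb : b ≠ 0) (hab : ‖a * b‖ < 1) :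
    ramanujanTheta a b =
      eulerFunction (a * b) * qPochhammer (-a) (a * b) * qPochhammer (-b) (a * b) := by
  have hE := eulerFunction_ne_zero hab
  have hprod (z : 𝕜) := (hasProd_qPochhammer z hab).tendsto_prod_nat
  have hinv := (tendsto_invQFactorial hab).comp
    (tendsto_natCast_atTop_atTop.atTop_add_atTop tendsto_natCast_atTop_atTop)
  have hlim := tendsto_tsum_finiteThetaTerm ha hb hab
  simp only [(hasSum_finiteThetaTerm ha hb hab _ _).tsum_eq] at hlim
  have h := tendsto_nhds_unique hlim (((hprod (-a)).mul (hprod (-b))).mul hinv)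
  field_simp at h
  linear_combination h

end JacobiTripleProduct

section ThetaDissection

section IntegerResidues

variable {G : Type*} [AddCommGroup G] [UniformSpace G] [IsUniformAddGroup G] [CompleteSpace G]
  [T0Space G] {f : ℤ → G}

lemma tsum_int_eq_sum_fin (hf : Summable f) (k : ℕ) [NeZero k] :
    ∑' n, f n = ∑ r : Fin k, ∑' n : ℤ, f (n * k + (r : ℕ)) := by
  have hsplit := ((Equiv.prodComm _ _).trans (Int.divModEquiv k).symm).hasSum_iff.mpr hf.hasSum
  have hfiber (r : Fin k) : HasSum (fun n : ℤ ↦ f (n * k + (r : ℕ)))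
      (∑' n : ℤ, f (n * k + (r : ℕ))) := (hsplit.summable.prod_factor r).hasSum
  exact (hsplit.prod_fiberwise hfiber).unique (hasSum_fintype _)

lemma tsum_int_eq_add_add (hf : Summable f) :
    ∑' n, f n = ∑' n, f (3 * n) + ∑' n, f (3 * n + 1) + ∑' n, f (3 * n - 1) := by
  have hshift : Summable fun n ↦ f (n - 1) := (Equiv.subRight (1 : ℤ)).summable_iff.mpr hf
  rw [← (Equiv.subRight (1 : ℤ)).tsum_eq f]
  simp only [Equiv.subRight_apply]
  rw [tsum_int_eq_sum_fin hshift 3, Fin.sum_univ_three, add_assoc, add_comm]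
  simp [mul_comm _ (3 : ℤ), add_sub_assoc]

end IntegerResidues

variable {𝕜 : Type*} [NormedField 𝕜] [CompleteSpace 𝕜] {a b : 𝕜}

lemma ramanujanTheta_eq_add_add (ha : a ≠ 0) (hb : b ≠ 0) (hab : ‖a * b‖ < 1) :
    ramanujanTheta a b = ramanujanTheta (a ^ 6 * b ^ 3) (a ^ 3 * b ^ 6) +
      a * ramanujanTheta (a ^ 9 * b ^ 6) (b ^ 3) + b * ramanujanTheta (a ^ 3) (a ^ 6 * b ^ 9) := by
  rw [ramanujanTheta, tsum_int_eq_add_add (summable_norm_thetaTerm ha hb hab).of_norm]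
  simp only [thetaTerm_three_mul ha hb, thetaTerm_three_mul_add_one ha hb,
    thetaTerm_three_mul_sub_one ha hb, tsum_mul_left, ramanujanTheta]

lemma ramanujanTheta_self_eq_add (ha : a ≠ 0) (ha' : ‖a‖ < 1) :
    ramanujanTheta a a =
      ramanujanTheta (a ^ 9) (a ^ 9) + 2 * a * ramanujanTheta (a ^ 3) (a ^ 15) := by
  rw [ramanujanTheta_eq_add_add ha ha (by simpa [← sq] using norm_pow_lt_one ha' two_ne_zero),
    ← pow_add, ← pow_add, ← pow_add, ← pow_add, ramanujanTheta_comm (a ^ (9 + 6))]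
  ring

lemma ramanujanTheta_one_left_eq_add (ha : a ≠ 0) (ha' : ‖a‖ < 1) :
    ramanujanTheta 1 a =
      2 * ramanujanTheta (a ^ 3) (a ^ 6) + a * ramanujanTheta 1 (a ^ 9) := by
  rw [ramanujanTheta_eq_add_add one_ne_zero ha (by rwa [one_mul])]
  simp only [one_pow, one_mul, ramanujanTheta_comm (a ^ 6)]
  ring

end ThetaDissection

section ThetaValues

variable {𝕜 : Type*} [NormedField 𝕜] [CompleteSpace 𝕜] {x : 𝕜}

lemma ramanujanTheta_neg_neg (hx0 : x ≠ 0) (hx : ‖x‖ < 1) :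
    ramanujanTheta (-x) (-x) = eulerFunction x ^ 2 / eulerFunction (x ^ 2) := by
  have h2 := eulerFunction_pow_ne_zero hx two_ne_zero
  have hx2 : -x * -x = x ^ 2 := by ring
  rw [ramanujanTheta_eq_qPochhammer (neg_ne_zero.mpr hx0) (neg_ne_zero.mpr hx0)
    (by simpa only [hx2] using norm_pow_lt_one hx two_ne_zero), hx2, neg_neg,
    qPochhammer_self_sq hx]
  field_simp

lemma ramanujanTheta_one_left (hx0 : x ≠ 0) (hx : ‖x‖ < 1) :
    ramanujanTheta 1 x = 2 * eulerFunction (x ^ 2) ^ 2 / eulerFunction x := by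
  have h1 := eulerFunction_ne_zero hx
  rw [ramanujanTheta_eq_qPochhammer one_ne_zero hx0 (by rwa [one_mul]), one_mul,
    qPochhammer_eq_one_sub_mul (-1) hx, neg_one_mul, qPochhammer_neg_self hx]
  field_simp
  ring

lemma ramanujanTheta_self_sq (hx0 : x ≠ 0) (hx : ‖x‖ < 1) :
    ramanujanTheta x (x ^ 2) = eulerFunction (x ^ 2) * eulerFunction (x ^ 3) ^ 2 /
      (eulerFunction x * eulerFunction (x ^ 6)) := by
  have hx3 : x * x ^ 2 = x ^ 3 := by ring
  rw [ramanujanTheta_eq_qPochhammer hx0 (pow_ne_zero 2 hx0)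
    (by simpa only [hx3] using norm_pow_lt_one hx three_ne_zero), hx3, mul_assoc,
    qPochhammer_neg_mul_qPochhammer_neg_sq hx]
  ring

lemma ramanujanTheta_neg_neg_pow_five (hx0 : x ≠ 0) (hx : ‖x‖ < 1) :
    ramanujanTheta (-x) (-x ^ 5) = eulerFunction x * eulerFunction (x ^ 6) ^ 2 /
      (eulerFunction (x ^ 2) * eulerFunction (x ^ 3)) := by
  have hx6 : -x * -x ^ 5 = x ^ 6 := by ring
  rw [ramanujanTheta_eq_qPochhammer (neg_ne_zero.mpr hx0) (neg_ne_zero.mpr (pow_ne_zero 5 hx0))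
    (by simpa only [hx6] using norm_pow_lt_one hx (by norm_num : 6 ≠ 0)), hx6, neg_neg, neg_neg,
    mul_assoc, qPochhammer_mul_qPochhammer_pow_five hx]
  ring

end ThetaValues

section CubicContinuedFraction

variable {𝕜 : Type*} [NormedField 𝕜] {q x : 𝕜}

/-- The cubic continued fraction written as an eta quotient in `x = q^{1/3}`. -/
noncomputable def cubicCF (x : 𝕜) : 𝕜 :=
  x * eulerFunction (x ^ 3) * eulerFunction (x ^ 18) ^ 3 /
    (eulerFunction (x ^ 6) * eulerFunction (x ^ 9) ^ 3)

variable [CompleteSpace 𝕜]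

lemma hasProd_cubicCF (hq : ‖q‖ < 1) :
    HasProd (fun n : ℕ ↦ (1 - q ^ (6 * (n + 1) - 1)) * (1 - q ^ (6 * (n + 1) - 5)) /
        (1 - q ^ (6 * (n + 1) - 3)) ^ 2)
      (eulerFunction q * eulerFunction (q ^ 6) ^ 3 /
        (eulerFunction (q ^ 2) * eulerFunction (q ^ 3) ^ 3)) := by
  have hE (k : ℕ) (hk : k ≠ 0) := eulerFunction_pow_ne_zero hq hk
  have hq3 := norm_pow_lt_one hq three_ne_zero
  have hq6 := norm_pow_lt_one hq (by norm_num : 6 ≠ 0)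
  have hP (k : ℕ) := hasProd_qPochhammer (q ^ k) hq6
  have hP3 := qPochhammer_ne_zero hq3 hq6
  have hsq := qPochhammer_self_sq hq3
  rw [← pow_mul] at hsq
  have hvalue : eulerFunction q * eulerFunction (q ^ 6) ^ 3 /
      (eulerFunction (q ^ 2) * eulerFunction (q ^ 3) ^ 3) =
        qPochhammer (q ^ 1) (q ^ 6) * qPochhammer (q ^ 5) (q ^ 6) /
          (qPochhammer (q ^ 3) (q ^ 6) * qPochhammer (q ^ 3) (q ^ 6)) := by
    rw [pow_one, qPochhammer_mul_qPochhammer_pow_five hq, hsq]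
    field_simp [hE]
  rw [hvalue]
  refine (((hP 1).mul (hP 5)).div₀ ((hP 3).mul (hP 3)) (mul_ne_zero hP3 hP3)).congr_fun fun n ↦ ?_
  rw [show 6 * (n + 1) - 1 = 5 + 6 * n by lia, show 6 * (n + 1) - 5 = 1 + 6 * n by lia,
    show 6 * (n + 1) - 3 = 3 + 6 * n by lia]
  ring

lemma cubicCF_ne_zero (hx0 : x ≠ 0) (hx : ‖x‖ < 1) : cubicCF x ≠ 0 := by
  have h (k : ℕ) (hk : k ≠ 0) := eulerFunction_pow_ne_zero hx hk
  simp [cubicCF, hx0, h]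

lemma cubicCF_mul_cubicCF_neg (hx : ‖x‖ < 1) : cubicCF x * cubicCF (-x) = -cubicCF (x ^ 2) := by
  have hE (k : ℕ) (hk : k ≠ 0) := eulerFunction_pow_ne_zero hx hk
  have h3 := eulerFunction_neg (norm_pow_lt_one hx three_ne_zero)
  have h9 := eulerFunction_neg (norm_pow_lt_one hx (by norm_num : 9 ≠ 0))
  simp only [← pow_mul, Nat.reduceMul] at h3 h9
  simp only [cubicCF, Odd.neg_pow (by decide : Odd 3), Odd.neg_pow (by decide : Odd 9),
    Even.neg_pow (by decide : Even 6), Even.neg_pow (by decide : Even 18), h3, h9, ← pow_mul,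
    Nat.reduceMul]
  field_simp [hE]

lemma one_sub_two_mul_cubicCF (hx0 : x ≠ 0) (hx : ‖x‖ < 1) :
    1 - 2 * cubicCF x = eulerFunction x ^ 2 * eulerFunction (x ^ 18) /
      (eulerFunction (x ^ 2) * eulerFunction (x ^ 9) ^ 2) := by
  have hE (k : ℕ) (hk : k ≠ 0) := eulerFunction_pow_ne_zero hx hk
  have hsplit := ramanujanTheta_self_eq_add (neg_ne_zero.mpr hx0) (by rwa [norm_neg])
  have hx15 : (-x) ^ 15 = -(x ^ 3) ^ 5 := by ring
  rw [hx15, Odd.neg_pow (by decide), Odd.neg_pow (by decide), ramanujanTheta_neg_neg hx0 hx,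
    ramanujanTheta_neg_neg (pow_ne_zero 9 hx0) (norm_pow_lt_one hx (by norm_num)),
    ramanujanTheta_neg_neg_pow_five (pow_ne_zero 3 hx0) (norm_pow_lt_one hx three_ne_zero)]
    at hsplit
  simp only [← pow_mul, Nat.reduceMul] at hsplit
  rw [cubicCF]
  field_simp [hE] at hsplit ⊢
  linear_combination -hsplit

lemma one_add_inv_cubicCF [NeZero (2 : 𝕜)] (hx0 : x ≠ 0) (hx : ‖x‖ < 1) :
    1 + (cubicCF x)⁻¹ = eulerFunction (x ^ 2) ^ 2 * eulerFunction (x ^ 9) /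
      (x * eulerFunction x * eulerFunction (x ^ 18) ^ 2) := by
  have hE1 := eulerFunction_ne_zero hx
  have hE (k : ℕ) (hk : k ≠ 0) := eulerFunction_pow_ne_zero hx hk
  have hsplit := ramanujanTheta_one_left_eq_add hx0 hx
  have hx6 : x ^ 6 = (x ^ 3) ^ 2 := by ring
  rw [hx6, ramanujanTheta_one_left hx0 hx,
    ramanujanTheta_one_left (pow_ne_zero 9 hx0) (norm_pow_lt_one hx (by norm_num)),
    ramanujanTheta_self_sq (pow_ne_zero 3 hx0) (norm_pow_lt_one hx three_ne_zero)] at hsplit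
  simp only [← pow_mul, Nat.reduceMul] at hsplit
  rw [cubicCF, ← mul_right_inj' (two_ne_zero (α := 𝕜))]
  field_simp [hE] at hsplit ⊢
  linear_combination -hsplit

theorem four_mul_cubicCF_sq_add_inv [NeZero (2 : 𝕜)] (hx0 : x ≠ 0) (hx : ‖x‖ < 1) :
    4 * cubicCF x ^ 2 + (cubicCF x)⁻¹ =
      3 + eulerFunction x ^ 3 / (x * eulerFunction (x ^ 9) ^ 3) := by
  have hc := cubicCF_ne_zero hx0 hx
  have hE (k : ℕ) (hk : k ≠ 0) := eulerFunction_pow_ne_zero hx hk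
  calc
    4 * cubicCF x ^ 2 + (cubicCF x)⁻¹ = 3 + (1 - 2 * cubicCF x) ^ 2 * (1 + (cubicCF x)⁻¹) := by
      field_simp
      ring
    _ = 3 + eulerFunction x ^ 3 / (x * eulerFunction (x ^ 9) ^ 3) := by
      rw [one_sub_two_mul_cubicCF hx0 hx, one_add_inv_cubicCF hx0 hx]
      field_simp [hE]

lemma one_add_inv_cubicCF_sq [NeZero (2 : 𝕜)] (hx0 : x ≠ 0) (hx : ‖x‖ < 1) :
    (1 + (cubicCF x)⁻¹) ^ 2 = (1 - 2 * cubicCF (-x)) * (1 + (cubicCF (x ^ 2))⁻¹) := by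
  have hE1 := eulerFunction_ne_zero hx
  have hE (k : ℕ) (hk : k ≠ 0) := eulerFunction_pow_ne_zero hx hk
  have h9 := eulerFunction_neg (norm_pow_lt_one hx (by norm_num : 9 ≠ 0))
  rw [one_add_inv_cubicCF hx0 hx,
    one_add_inv_cubicCF (pow_ne_zero 2 hx0) (norm_pow_lt_one hx two_ne_zero),
    one_sub_two_mul_cubicCF (neg_ne_zero.mpr hx0) (by rwa [norm_neg])]
  simp only [← pow_mul, Nat.reduceMul] at h9 ⊢
  simp only [Odd.neg_pow (by decide : Odd 9), Even.neg_pow (by decide : Even 2),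
    Even.neg_pow (by decide : Even 18), h9, eulerFunction_neg hx]
  field_simp [hE]

theorem cubicCF_modular_equation [NeZero (2 : 𝕜)] (hx0 : x ≠ 0) (hx : ‖x‖ < 1) :
    cubicCF x ^ 2 + 2 * cubicCF x * cubicCF (x ^ 2) ^ 2 = cubicCF (x ^ 2) := by
  have hc := cubicCF_ne_zero hx0 hx
  have hc2 := cubicCF_ne_zero (pow_ne_zero 2 hx0) (norm_pow_lt_one hx two_ne_zero)
  have hneg : cubicCF (-x) = -cubicCF (x ^ 2) / cubicCF x := by
    rw [eq_div_iff hc, mul_comm, cubicCF_mul_cubicCF_neg hx]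
  have h := one_add_inv_cubicCF_sq hx0 hx
  rw [hneg] at h
  field_simp at h
  linear_combination -h

end CubicContinuedFraction

section UpperHalfPlane

lemma c_eq_cubicCF {τ : ℂ} (hτ : 0 < τ.im) : c τ = cubicCF (qParam 3 τ) := by
  have hx : exp (2 * Real.pi * I * τ / 3) = qParam 3 τ := by simp [qParam]
  have hq : nome τ = qParam 3 τ ^ 3 := by
    rw [nome, ← hx, ← exp_nat_mul]
    push_cast
    ring_nf
  have hprod := (hasProd_cubicCF
    (norm_pow_lt_one (norm_qParam_lt_one three_pos hτ) three_ne_zero)).tprod_eq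
  simp only [← hq] at hprod
  rw [c, hx, hprod, cubicCF, hq]
  ring_nf

lemma dedekindEta_eq_eulerFunction (τ : ℂ) :
    dedekindEta τ = exp (Real.pi * I * τ / 12) * eulerFunction (exp (2 * Real.pi * I * τ)) := by
  rw [dedekindEta, eulerFunction, qPochhammer]
  congr 3 with n
  rw [← exp_nat_mul, ← exp_add]
  ring_nf

lemma beta_eq_eulerFunction (τ : ℂ) :
    beta τ = 3 + eulerFunction (qParam 3 τ) ^ 3 /
      (qParam 3 τ * eulerFunction (qParam 3 τ ^ 9) ^ 3) := by
  set x := qParam 3 τ with hx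
  have hx1 : exp (2 * Real.pi * I * (τ / 3)) = x := by
    rw [hx, qParam]
    push_cast
    ring_nf
  have hx9 : exp (2 * Real.pi * I * (3 * τ)) = x ^ 9 := by
    rw [← hx1, ← exp_nat_mul]
    push_cast
    ring_nf
  have hlead : exp (Real.pi * I * (3 * τ) / 12) ^ 3 =
      exp (Real.pi * I * (τ / 3) / 12) ^ 3 * x := by
    rw [← hx1, ← exp_nat_mul, ← exp_nat_mul, ← exp_add]
    ring_nf
  rw [beta, dedekindEta_eq_eulerFunction, dedekindEta_eq_eulerFunction, hx1, hx9, mul_pow, mul_pow,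
    hlead, mul_assoc (_ ^ 3), mul_div_mul_left _ _ (pow_ne_zero _ (exp_ne_zero _))]

lemma qParam_three_half_add_sq (τ : ℂ) : qParam 3 (τ / 2 + 3 / 2) ^ 2 = qParam 3 τ := by
  rw [qParam, qParam, ← exp_nat_mul, ← exp_periodic (2 * Real.pi * I * τ / (3 : ℝ))]
  push_cast
  ring_nf

end UpperHalfPlane

/-- For `τ` in the upper half-plane, `c(τ) ≠ 0`, `c₁(τ/2) ≠ 0`, and the three roots of
`4x³ − β(τ)x + 1` are exactly `c(τ)`, `c₁(τ/2)/(2c(τ))` and `−1/(2c₁(τ/2))`. -/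
theorem cubicCF_three_roots (τ : ℂ) (hτ : 0 < τ.im) :
    c τ ≠ 0 ∧ c₁ (τ / 2) ≠ 0 ∧
    ∀ z : ℂ, 4 * z ^ 3 - beta τ * z + 1 =
      4 * (z - c τ) * (z - c₁ (τ / 2) / (2 * c τ)) * (z + 1 / (2 * c₁ (τ / 2))) := by
  have hτ' : 0 < (τ / 2 + 3 / 2).im := by simpa using hτ
  have hx0 : qParam 3 τ ≠ 0 := qParam_ne_zero τ
  have hy0 : qParam 3 (τ / 2 + 3 / 2) ≠ 0 := qParam_ne_zero _
  have hx1 : ‖qParam 3 τ‖ < 1 := norm_qParam_lt_one three_pos hτ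
  have hy1 : ‖qParam 3 (τ / 2 + 3 / 2)‖ < 1 := norm_qParam_lt_one three_pos hτ'
  have hc : c τ ≠ 0 := by
    rw [c_eq_cubicCF hτ]
    exact cubicCF_ne_zero hx0 hx1
  have hc₁ : c₁ (τ / 2) ≠ 0 := by
    rw [c₁, c_eq_cubicCF hτ']
    exact cubicCF_ne_zero hy0 hy1
  have hbeta : beta τ = 4 * c τ ^ 2 + (c τ)⁻¹ := by
    rw [c_eq_cubicCF hτ, beta_eq_eulerFunction, four_mul_cubicCF_sq_add_inv hx0 hx1]
  have hmod : c₁ (τ / 2) ^ 2 + 2 * c₁ (τ / 2) * c τ ^ 2 = c τ := by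
    rw [c₁, c_eq_cubicCF hτ, c_eq_cubicCF hτ', ← qParam_three_half_add_sq τ]
    exact cubicCF_modular_equation hy0 hy1
  refine ⟨hc, hc₁, fun z ↦ ?_⟩
  rw [hbeta]
  field_simp
  linear_combination (8 * z ^ 2 - 8 * z * c τ) * hmod
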